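/- Let δ ≥ 2 and let Γ = {a, h, t, x} be a four-element set. Let B₁ be the set of multisets of size δ over Γ of one of the two forms: one a and δ−1 x's; one h, one t, and δ−2 x's. Set A = {x}, H = {h,x}, T = {t,x}, X = {a,h,t,x}. Then for every δ-tuple (S₁,…,S_δ) with each S_i ∈ {A, H, T, X}, there exist x₁ ∈ S₁, …, x_δ ∈ S_δ with the multiset {x₁,…,x_δ} ∈ B₁ if and only if some S_i equals X, or there are indices i ≠ j with S_i = H and S_j = T. -/

import Mathlib

/-- The four-letter alphabet `Γ = {a, h, t, x}`. -/
inductive Gam : Type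
  | a | h | t | x
deriving DecidableEq

instance : Fintype Gam where
  elems := {Gam.a, Gam.h, Gam.t, Gam.x}
  complete := by intro g; cases g <;> simp

/-- The multiset of values of a tuple. -/
def tupleMultiset {n : ℕ} (f : Fin n → Gam) : Multiset Gam :=
  (Finset.univ : Finset (Fin n)).val.map f

/-- Membership in the black constraint `B₁`: the multiset consists of one `a` and `δ-1`
`x`'s, or of one `h`, one `t`, and `δ-2` `x`'s. -/
def InB1 (δ : ℕ) (m : Multiset Gam) : Prop :=
  m = Gam.a ::ₘ Multiset.replicate (δ - 1) Gam.x ∨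
  m = Gam.h ::ₘ Gam.t ::ₘ Multiset.replicate (δ - 2) Gam.x

/-!
Every `S i` contains `x`, so only the non-`x` letters of a target multiset are constrained: peeling
them off one at a time, each must lie in the set of a coordinate of its own, and the other
coordinates take `x`. Hence `B₁` can be realised iff some `S i` contains `a`, or two distinct
coordinates contain `h` and `t`. Among `A, H, T, X` only `X` contains `a`, only `H, X` contain `h`,
and only `T, X` contain `t`.
-/

section Realizable

variable {ι α : Type*}

/-- The multiset `m` can be obtained by choosing one element of `S i` for each `i ∈ s`. The choice
is encoded as a total function, whose values outside `s` play no role. -/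
def Realizable (S : ι → Set α) (s : Finset ι) (m : Multiset α) : Prop :=
  ∃ f : ι → α, (∀ i ∈ s, f i ∈ S i) ∧ s.val.map f = m

variable {S : ι → Set α} {s : Finset ι}

theorem realizable_replicate_card {x : α} (hx : ∀ i ∈ s, x ∈ S i) :
    Realizable S s (Multiset.replicate s.card x) :=
  ⟨fun _ ↦ x, hx, Multiset.map_const' s.val x⟩

theorem Realizable.cons_of_erase [DecidableEq ι] {m : Multiset α} {b : α} {i : ι} (hi : i ∈ s)
    (hb : b ∈ S i) (hm : Realizable S (s.erase i) m) : Realizable S s (b ::ₘ m) := by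
  obtain ⟨f, hf, rfl⟩ := hm
  refine ⟨Function.update f i b, fun j hj ↦ ?_, ?_⟩
  · rcases eq_or_ne j i with rfl | hji
    · rwa [Function.update_self]
    · rw [Function.update_of_ne hji]
      exact hf j (Finset.mem_erase.2 ⟨hji, hj⟩)
  · refine (Multiset.map_eq_cons _ _ _ _).1 ⟨i, hi, Function.update_self .., ?_⟩
    exact Multiset.map_congr rfl fun j hj ↦
      Function.update_of_ne (Finset.ne_of_mem_erase hj) b f

theorem realizable_cons_iff [DecidableEq ι] {m : Multiset α} {b : α} :
    Realizable S s (b ::ₘ m) ↔ ∃ i ∈ s, b ∈ S i ∧ Realizable S (s.erase i) m := by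
  constructor
  · rintro ⟨f, hf, hfm⟩
    obtain ⟨i, hi, rfl, herase⟩ := (Multiset.map_eq_cons f s.val m b).2 hfm
    exact ⟨i, hi, hf i hi, f, fun j hj ↦ hf j (Finset.mem_of_mem_erase hj), herase⟩
  · rintro ⟨i, hi, hb, hm⟩
    exact hm.cons_of_erase hi hb

theorem realizable_cons_replicate_iff {x b : α} (hx : ∀ i ∈ s, x ∈ S i) :
    Realizable S s (b ::ₘ Multiset.replicate (s.card - 1) x) ↔ ∃ i ∈ s, b ∈ S i := by
  classical
  have hrest : ∀ i ∈ s, Realizable S (s.erase i) (Multiset.replicate (s.card - 1) x) := by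
    intro i hi
    rw [← Finset.card_erase_of_mem hi]
    exact realizable_replicate_card fun j hj ↦ hx j (Finset.mem_of_mem_erase hj)
  rw [realizable_cons_iff]
  exact exists_congr fun i ↦ and_congr_right fun hi ↦ and_iff_left (hrest i hi)

theorem realizable_cons_cons_replicate_iff {x b c : α} (hx : ∀ i ∈ s, x ∈ S i) :
    Realizable S s (b ::ₘ c ::ₘ Multiset.replicate (s.card - 2) x) ↔
      ∃ i ∈ s, ∃ j ∈ s, i ≠ j ∧ b ∈ S i ∧ c ∈ S j := by
  classical
  have hrest : ∀ i ∈ s, Realizable S (s.erase i) (c ::ₘ Multiset.replicate (s.card - 2) x) ↔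
      ∃ j ∈ s.erase i, c ∈ S j := by
    intro i hi
    have hcard : s.card - 2 = (s.erase i).card - 1 := by
      rw [Finset.card_erase_of_mem hi, Nat.sub_sub]
    rw [hcard]
    exact realizable_cons_replicate_iff fun j hj ↦ hx j (Finset.mem_of_mem_erase hj)
  rw [realizable_cons_iff]
  constructor
  · rintro ⟨i, hi, hb, hc⟩
    obtain ⟨j, hj, hcj⟩ := (hrest i hi).1 hc
    exact ⟨i, hi, j, Finset.mem_of_mem_erase hj, (Finset.ne_of_mem_erase hj).symm, hb, hcj⟩
  · rintro ⟨i, hi, j, hj, hij, hb, hc⟩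
    exact ⟨i, hi, hb, (hrest i hi).2 ⟨j, Finset.mem_erase.2 ⟨hij.symm, hj⟩, hc⟩⟩

end Realizable

theorem exists_choice_inB1_iff {δ : ℕ} {S : Fin δ → Set Gam} (hx : ∀ i, Gam.x ∈ S i) :
    (∃ f : Fin δ → Gam, (∀ i, f i ∈ S i) ∧ InB1 δ (tupleMultiset f)) ↔
      (∃ i, Gam.a ∈ S i) ∨ ∃ i j, i ≠ j ∧ Gam.h ∈ S i ∧ Gam.t ∈ S j := by
  have hone := realizable_cons_replicate_iff (s := Finset.univ) (b := Gam.a) fun i _ ↦ hx i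
  have htwo := realizable_cons_cons_replicate_iff (s := Finset.univ) (b := Gam.h) (c := Gam.t)
    fun i _ ↦ hx i
  simp only [Realizable, Finset.card_univ, Fintype.card_fin, Finset.mem_univ, true_and,
    forall_const] at hone htwo
  simp only [InB1, tupleMultiset, and_or_left, exists_or, hone, htwo]

/-- The labels `A = {x}`, `H = {h, x}`, `T = {t, x}`, `X = Γ` that may occur as the sets `S i`. -/
def IsLabel (L : Set Gam) : Prop :=
  L = {Gam.x} ∨ L = {Gam.h, Gam.x} ∨ L = {Gam.t, Gam.x} ∨ L = Set.univ

namespace IsLabel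

variable {L : Set Gam}

theorem x_mem (hL : IsLabel L) : Gam.x ∈ L := by
  rcases hL with rfl | rfl | rfl | rfl <;> simp

theorem a_mem_iff (hL : IsLabel L) : Gam.a ∈ L ↔ L = Set.univ := by
  refine ⟨fun ha ↦ ?_, fun h ↦ h ▸ Set.mem_univ _⟩
  rcases hL with rfl | rfl | rfl | rfl <;> simp_all

theorem h_mem_iff (hL : IsLabel L) : Gam.h ∈ L ↔ L = {Gam.h, Gam.x} ∨ L = Set.univ := by
  refine ⟨fun hh ↦ ?_, by rintro (rfl | rfl) <;> simp⟩
  rcases hL with rfl | rfl | rfl | rfl <;> simp_all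

theorem t_mem_iff (hL : IsLabel L) : Gam.t ∈ L ↔ L = {Gam.t, Gam.x} ∨ L = Set.univ := by
  refine ⟨fun ht ↦ ?_, by rintro (rfl | rfl) <;> simp⟩
  rcases hL with rfl | rfl | rfl | rfl <;> simp_all

end IsLabel

/-- With `A = {x}`, `H = {h,x}`, `T = {t,x}`, `X = Γ`: a `δ`-tuple of sets,
each among `A, H, T, X`, admits a choice forming a multiset in `B₁` iff some coordinate is
`X`, or there are two distinct coordinates, one equal to `H` and one equal to `T`. -/
theorem stmt_15 (δ : ℕ) (hδ : 2 ≤ δ)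
    (S : Fin δ → Set Gam)
    (hS : ∀ i, S i = ({Gam.x} : Set Gam) ∨ S i = ({Gam.h, Gam.x} : Set Gam) ∨
      S i = ({Gam.t, Gam.x} : Set Gam) ∨ S i = Set.univ) :
    (∃ f : Fin δ → Gam, (∀ i, f i ∈ S i) ∧ InB1 δ (tupleMultiset f)) ↔
    ((∃ i, S i = Set.univ) ∨
     (∃ i j : Fin δ, i ≠ j ∧ S i = ({Gam.h, Gam.x} : Set Gam) ∧
       S j = ({Gam.t, Gam.x} : Set Gam))) := by
  have hlabel : ∀ i, IsLabel (S i) := hS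
  rw [exists_choice_inB1_iff fun i ↦ (hlabel i).x_mem]
  simp only [(hlabel _).a_mem_iff, (hlabel _).h_mem_iff, (hlabel _).t_mem_iff]
  constructor
  · rintro (hX | ⟨i, j, hij, hH | hX, hT | hX'⟩)
    · exact .inl hX
    · exact .inr ⟨i, j, hij, hH, hT⟩
    · exact .inl ⟨j, hX'⟩
    · exact .inl ⟨i, hX⟩
    · exact .inl ⟨i, hX⟩
  · rintro (hX | ⟨i, j, hij, hH, hT⟩)
    · exact .inl hX
    · exact .inr ⟨i, j, hij, .inl hH, .inl hT⟩
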